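/- For λ ≥ 0 and p, q ∈ {1,…,N} define the 2-point function G_{|pq|}(λ) := (1/N)·∂²(log Z)/∂J_{pq}∂K_{qp} evaluated at (J,K) = (0,0). Then G_{|pq|}(0) = 1/(E_p+Ẽ_q), and lim_{λ→0⁺} (G_{|pq|}(λ) − 1/(E_p+Ẽ_q))/λ = −(1/(E_p+Ẽ_q)²)·(1/N)·( Σ_{l=1}^N 1/(E_p+Ẽ_l) + Σ_{k=1}^N 1/(E_k+Ẽ_q) ). -/

import Mathlib

/-!
The generating function `log Z` is the cumulant generating function of `N Φ` under the probability
measure `exp (-N S(Φ)) dΦ / Z(0,0)`, and one-point functions vanish by `Φ ↦ -Φ`, so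
`G_{|pq|}(λ) = N ⟨|Φ_{pq}|²⟩_λ`. As `Tr((Φ*Φ)²) ≥ 0`, this measure is a tilting of the Gaussian
measure at `λ = 0` by a bounded weight, and linear response gives the right derivative
`-(N²/2) Cov(|Φ_{pq}|², Tr((Φ*Φ)²))` at `0`, a Gaussian covariance.

Expand the trace into terms `conj Φ_{ai} Φ_{aj} conj Φ_{bj} Φ_{bi}`. If `a ≠ b` and `i ≠ j`, the
term is odd under the symmetry `Φ_{ai} ↦ -Φ_{ai}` and drops out. The remaining terms are
`|Φ_{ai}|² |Φ_{bj}|²` with `a = b` or `i = j`, products of independent exponential variables; Wick's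
rule for these, `Cov(|Φ_s|², ∏ |Φ_t|^{2 k_t}) = k_s ⟨|Φ_s|²⟩ ⟨∏ |Φ_t|^{2 k_t}⟩`, leaves the row and
the column through `(p, q)`: the two sums in the answer.
-/

open MeasureTheory Matrix

/-- The LSZ action `S(Φ) = Σ_{m,n} (E_n + Ẽ_m)|Φ_{nm}|² + (λ/2)·Tr((Φ*Φ)²)`,
viewed as a complex number. -/
noncomputable def lszAction (N : ℕ) (E Et : Fin N → ℝ) (lam : ℝ)
    (Φ : Fin N → Fin N → ℂ) : ℂ :=
  (∑ n, ∑ m, (((E n + Et m : ℝ)) : ℂ) * ((Complex.normSq (Φ n m) : ℝ) : ℂ))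
    + ((lam / 2 : ℝ) : ℂ) *
      ((((Matrix.of Φ)ᴴ * Matrix.of Φ) * ((Matrix.of Φ)ᴴ * Matrix.of Φ)).trace)

/-- The integrand of the LSZ partition function with sources `J`, `K`. -/
noncomputable def lszIntegrand (N : ℕ) (E Et : Fin N → ℝ) (lam : ℝ)
    (J K : Fin N → Fin N → ℂ) (Φ : Fin N → Fin N → ℂ) : ℂ :=
  Complex.exp (-(N : ℂ) * lszAction N E Et lam Φ
    + (N : ℂ) * ((∑ m, ∑ n, J n m * (starRingEnd ℂ) (Φ n m))
      + ∑ m, ∑ n, K m n * Φ n m))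

/-- The LSZ partition function `Z(J,K)`. -/
noncomputable def lszZ (N : ℕ) (E Et : Fin N → ℝ) (lam : ℝ)
    (J K : Fin N → Fin N → ℂ) : ℂ :=
  ∫ Φ : Fin N → Fin N → ℂ, lszIntegrand N E Et lam J K Φ

/-- The elementary matrix with a single `1` at position `(a,b)`. -/
def eMat (N : ℕ) (a b : Fin N) : Fin N → Fin N → ℂ :=
  fun i j => if i = a ∧ j = b then 1 else 0

/-- The holomorphic partial derivative `∂/∂J_{ab}` of a function of `(J,K)`. -/
noncomputable def dJ (N : ℕ) (a b : Fin N)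
    (f : (Fin N → Fin N → ℂ) → (Fin N → Fin N → ℂ) → ℂ) :
    (Fin N → Fin N → ℂ) → (Fin N → Fin N → ℂ) → ℂ :=
  fun J K => deriv (fun t : ℂ => f (J + t • eMat N a b) K) 0

/-- The holomorphic partial derivative `∂/∂K_{ab}` of a function of `(J,K)`. -/
noncomputable def dK (N : ℕ) (a b : Fin N)
    (f : (Fin N → Fin N → ℂ) → (Fin N → Fin N → ℂ) → ℂ) :
    (Fin N → Fin N → ℂ) → (Fin N → Fin N → ℂ) → ℂ :=
  fun J K => deriv (fun t : ℂ => f J (K + t • eMat N a b)) 0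

/-- The 2-point function `G_{|pq|}(λ) = (1/N)·∂²(log Z)/∂J_{pq}∂K_{qp}|_{J=K=0}`. -/
noncomputable def lszG2 (N : ℕ) (E Et : Fin N → ℝ) (p q : Fin N) (lam : ℝ) : ℂ :=
  (1 / (N : ℂ)) *
    dJ N p q (dK N q p (fun J K => Complex.log (lszZ N E Et lam J K))) 0 0

section ExponentialMoments

variable {E F : Type*} [NormedAddCommGroup E]

/-- `f` grows at most exponentially in the norm: the observables that are integrable against
every measure with exponential moments. -/
def HasExpGrowth [Norm F] (f : E → F) : Prop :=
  ∃ C d : ℝ, ∀ x, ‖f x‖ ≤ C * Real.exp (d * ‖x‖)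

/-- All exponential moments of the norm are finite under `μ`. -/
def HasExpMoments [MeasurableSpace E] (μ : Measure E) : Prop :=
  ∀ d : ℝ, Integrable (fun x => Real.exp (d * ‖x‖)) μ

lemma hasExpGrowth_const [Norm F] (y : F) : HasExpGrowth fun _ : E => y :=
  ⟨‖y‖, 0, by simp⟩

lemma HasExpGrowth.of_norm_le {G : Type*} [Norm F] [Norm G] {f : E → F} {g : E → G}
    (hg : HasExpGrowth g) (hfg : ∀ x, ‖f x‖ ≤ ‖g x‖) : HasExpGrowth f :=
  let ⟨C, d, h⟩ := hg
  ⟨C, d, fun x => (hfg x).trans (h x)⟩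

lemma HasExpGrowth.mul [NonUnitalSeminormedRing F] {f g : E → F} (hf : HasExpGrowth f)
    (hg : HasExpGrowth g) : HasExpGrowth fun x => f x * g x := by
  obtain ⟨C, d, hC⟩ := hf
  obtain ⟨C', d', hC'⟩ := hg
  refine ⟨C * C', d + d', fun x => ?_⟩
  calc ‖f x * g x‖ ≤ ‖f x‖ * ‖g x‖ := norm_mul_le _ _
    _ ≤ (C * Real.exp (d * ‖x‖)) * (C' * Real.exp (d' * ‖x‖)) :=
        mul_le_mul (hC x) (hC' x) (norm_nonneg _) ((norm_nonneg _).trans (hC x))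
    _ = C * C' * Real.exp ((d + d') * ‖x‖) := by rw [add_mul, Real.exp_add]; ring

lemma hasExpGrowth_clm [NormedSpace ℝ E] [SeminormedAddCommGroup F] [NormedSpace ℝ F]
    (l : E →L[ℝ] F) : HasExpGrowth l := by
  refine ⟨‖l‖, 1, fun x => (l.le_opNorm x).trans ?_⟩
  gcongr
  linarith [Real.add_one_le_exp (1 * ‖x‖)]

lemma hasExpGrowth_apply {α : Type*} [Fintype α] (s : α) : HasExpGrowth fun Φ : α → ℂ => Φ s :=
  hasExpGrowth_clm (ContinuousLinearMap.proj s : (α → ℂ) →L[ℝ] ℂ)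

lemma norm_cexp_mul_clm_le [NormedSpace ℝ E] (l : E →L[ℝ] ℂ) {t : ℂ} {r : ℝ} (ht : ‖t‖ ≤ r)
    (x : E) : ‖Complex.exp (t * l x)‖ ≤ Real.exp (r * ‖l‖ * ‖x‖) := by
  refine (Complex.norm_exp_le_exp_norm _).trans (Real.exp_le_exp.2 ?_)
  rw [norm_mul, mul_assoc]
  exact mul_le_mul ht (l.le_opNorm x) (norm_nonneg _) ((norm_nonneg t).trans ht)

lemma hasExpGrowth_cexp_mul_clm [NormedSpace ℝ E] (l : E →L[ℝ] ℂ) (t : ℂ) :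
    HasExpGrowth fun x => Complex.exp (t * l x) :=
  ⟨1, ‖t‖ * ‖l‖, fun x => by simpa only [one_mul] using norm_cexp_mul_clm_le l le_rfl x⟩

variable [MeasurableSpace E] {μ : Measure E}

lemma HasExpMoments.integrable [NormedAddCommGroup F] (hμ : HasExpMoments μ) {f : E → F}
    (hf : AEStronglyMeasurable f μ) (hfg : HasExpGrowth f) : Integrable f μ :=
  let ⟨C, d, h⟩ := hfg
  ((hμ d).const_mul C).mono' hf (ae_of_all _ h)

lemma HasExpMoments.memLp_two [NormedAddCommGroup F] (hμ : HasExpMoments μ) {f : E → F}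
    (hf : AEStronglyMeasurable f μ) (hfg : HasExpGrowth f) : MemLp f 2 μ := by
  rw [memLp_two_iff_integrable_sq_norm hf]
  have hsq : HasExpGrowth fun x => ‖f x‖ ^ 2 := by
    have hn : HasExpGrowth fun x => ‖f x‖ := hfg.of_norm_le fun x => (norm_norm (f x)).le
    simpa only [sq] using hn.mul hn
  exact hμ.integrable (hf.norm.pow 2) hsq

lemma HasExpMoments.tilted (hμ : HasExpMoments μ) {f : E → ℝ} {c : ℝ}
    (hfc : ∀ x, f x ≤ c) : HasExpMoments (μ.tilted f) := by
  by_cases hint : Integrable (fun x => Real.exp (f x)) μ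
  · intro d
    rw [integrable_tilted_iff hint]
    refine ((hμ d).const_mul (Real.exp c)).mono'
      (hint.aestronglyMeasurable.mul (hμ d).aestronglyMeasurable) (ae_of_all _ fun x => ?_)
    rw [smul_eq_mul, norm_mul, Real.norm_of_nonneg (Real.exp_pos _).le,
      Real.norm_of_nonneg (Real.exp_pos _).le]
    gcongr
    exact hfc x
  · simp [HasExpMoments, tilted_of_not_integrable hint]

variable [NormedSpace ℝ E] [OpensMeasurableSpace E]

lemma HasExpMoments.hasDerivAt_integral_mul_cexp (hμ : HasExpMoments μ) {f : E → ℂ}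
    (hf : AEStronglyMeasurable f μ) (hfg : HasExpGrowth f) (l : E →L[ℝ] ℂ) (t₀ : ℂ) :
    HasDerivAt (fun t : ℂ => ∫ x, f x * Complex.exp (t * l x) ∂μ)
      (∫ x, f x * l x * Complex.exp (t₀ * l x) ∂μ) t₀ := by
  have hexp (t : ℂ) : AEStronglyMeasurable (fun x => Complex.exp (t * l x)) μ :=
    (by fun_prop : Continuous fun x => Complex.exp (t * l x)).aestronglyMeasurable
  have hfl : AEStronglyMeasurable (fun x => f x * l x) μ :=
    hf.mul l.continuous.aestronglyMeasurable
  have hball {t : ℂ} (ht : t ∈ Metric.ball t₀ 1) : ‖t‖ ≤ ‖t₀‖ + 1 := by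
    have := norm_le_norm_add_norm_sub' t t₀
    have : ‖t - t₀‖ < 1 := mem_ball_iff_norm.1 ht
    linarith
  have hbound : Integrable
      (fun x => ‖f x * l x‖ * Real.exp ((‖t₀‖ + 1) * ‖l‖ * ‖x‖)) μ := by
    refine hμ.integrable (hfl.norm.mul (hμ _).aestronglyMeasurable)
      (HasExpGrowth.mul ?_ ⟨1, (‖t₀‖ + 1) * ‖l‖, fun x => by simp⟩)
    exact (hfg.mul (hasExpGrowth_clm l)).of_norm_le fun x => (norm_norm _).le
  refine (hasDerivAt_integral_of_dominated_loc_of_deriv_le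
    (F' := fun t x => f x * l x * Complex.exp (t * l x)) (Metric.ball_mem_nhds t₀ one_pos)
    (.of_forall fun t => hf.mul (hexp t))
    (hμ.integrable (hf.mul (hexp t₀)) (hfg.mul (hasExpGrowth_cexp_mul_clm l t₀)))
    (hfl.mul (hexp t₀)) (ae_of_all _ fun x t ht => ?_) hbound (ae_of_all _ fun x t _ => ?_)).2
  · rw [norm_mul]
    gcongr
    exact norm_cexp_mul_clm_le l (hball ht) x
  · convert! (((hasDerivAt_id t).mul_const (l x)).cexp).const_mul (f x) using 1
    simp only [id, one_mul]
    ring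

lemma HasExpMoments.deriv_deriv_log_integral_cexp (hμ : HasExpMoments μ) [IsProbabilityMeasure μ]
    (l l' : E →L[ℝ] ℂ) {C : ℝ} (hC : 0 < C) :
    deriv (fun s : ℂ => deriv (fun t : ℂ =>
        Complex.log (C * ∫ x, Complex.exp (s * l x) * Complex.exp (t * l' x) ∂μ)) 0) 0
      = (∫ x, l x * l' x ∂μ) - (∫ x, l x ∂μ) * ∫ x, l' x ∂μ := by
  have hCne : (C : ℂ) ≠ 0 := by exact_mod_cast hC.ne'
  set M : ℂ → ℂ := fun s => ∫ x, Complex.exp (s * l x) ∂μ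
  set A : ℂ → ℂ := fun s => ∫ x, l' x * Complex.exp (s * l x) ∂μ
  have hM : HasDerivAt M (∫ x, l x ∂μ) 0 := by
    simpa using hμ.hasDerivAt_integral_mul_cexp aestronglyMeasurable_const
      (hasExpGrowth_const (1 : ℂ)) l 0
  have hA : HasDerivAt A (∫ x, l x * l' x ∂μ) 0 := by
    simpa [mul_comm] using hμ.hasDerivAt_integral_mul_cexp
      l'.continuous.aestronglyMeasurable (hasExpGrowth_clm l') l 0
  have hM0 : M 0 = 1 := by simp [M]
  have hA0 : A 0 = ∫ x, l' x ∂μ := by simp [A]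
  have hslit : ∀ᶠ s in nhds 0, (C : ℂ) * M s ∈ Complex.slitPlane := by
    refine (continuousAt_const.mul hM.continuousAt).eventually_mem
      (Complex.isOpen_slitPlane.mem_nhds ?_)
    simpa only [Pi.mul_apply, hM0, mul_one] using Complex.ofReal_mem_slitPlane.2 hC
  have hinner : (fun s : ℂ => deriv (fun t : ℂ =>
      Complex.log (C * ∫ x, Complex.exp (s * l x) * Complex.exp (t * l' x) ∂μ)) 0)
      =ᶠ[nhds 0] fun s => A s / M s := by
    filter_upwards [hslit] with s hs
    have hd : HasDerivAt (fun t : ℂ => C * ∫ x, Complex.exp (s * l x) * Complex.exp (t * l' x) ∂μ)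
        (C * A s) 0 := by
      simpa [A, mul_comm] using (hμ.hasDerivAt_integral_mul_cexp
        (by fun_prop : Continuous fun x => Complex.exp (s * l x)).aestronglyMeasurable
        (hasExpGrowth_cexp_mul_clm l s) l' 0).const_mul (C : ℂ)
    simpa [M, mul_div_mul_left _ _ hCne] using (hd.clog (by simpa [M] using hs)).deriv
  rw [hinner.deriv_eq, (hA.fun_div hM (by simp [hM0])).deriv, hM0, hA0]
  ring

end ExponentialMoments

section LinearResponse

open ProbabilityTheory

variable {α : Type*} [MeasurableSpace α] {μ : Measure α} {f V : α → ℝ}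

lemma norm_exp_neg_sub_one_le {a : ℝ} (ha : 0 ≤ a) : ‖Real.exp (-a) - 1‖ ≤ a := by
  rw [Real.norm_of_nonpos (sub_nonpos.2 (Real.exp_le_one_iff.2 (neg_nonpos.2 ha)))]
  linarith [Real.add_one_le_exp (-a)]

lemma hasDerivWithinAt_integral_exp_neg_mul_mul (hV : ∀ x, 0 ≤ V x) (hVm : AEMeasurable V μ)
    (hf : Integrable f μ) (hVf : Integrable (fun x => V x * f x) μ) :
    HasDerivWithinAt (fun g : ℝ => ∫ x, Real.exp (-g * V x) * f x ∂μ)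
      (-∫ x, V x * f x ∂μ) (Set.Ici 0) 0 := by
  have hexp (g : ℝ) : AEStronglyMeasurable (fun x => Real.exp (-g * V x)) μ :=
    (hVm.const_mul (-g)).exp.aestronglyMeasurable
  have hint {g : ℝ} (hg : 0 ≤ g) : Integrable (fun x => Real.exp (-g * V x) * f x) μ := by
    refine hf.bdd_mul (c := 1) (hexp g) (ae_of_all _ fun x => ?_)
    rw [Real.norm_of_nonneg (Real.exp_pos _).le, Real.exp_le_one_iff, neg_mul]
    exact neg_nonpos.2 (mul_nonneg hg (hV x))
  rw [← hasDerivWithinAt_Ioi_iff_Ici,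
    hasDerivWithinAt_iff_tendsto_slope' Set.self_notMem_Ioi, ← integral_neg]
  have hslope : ∀ g ∈ Set.Ioi (0 : ℝ),
      ∫ x, g⁻¹ * (Real.exp (-g * V x) - 1) * f x ∂μ
        = slope (fun g : ℝ => ∫ x, Real.exp (-g * V x) * f x ∂μ) 0 g := by
    intro g hg
    rw [slope_def_field, ← integral_sub (hint (le_of_lt hg)) (hint le_rfl), ← integral_div]
    congr 1 with x
    rw [neg_zero, zero_mul, Real.exp_zero, sub_zero]
    ring
  refine (Filter.tendsto_congr' (eventually_mem_nhdsWithin.mono hslope)).1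
    (tendsto_integral_filter_of_dominated_convergence (fun x => ‖V x * f x‖) ?_ ?_ hVf.norm ?_)
  · exact .of_forall fun g => (((hexp g).sub aestronglyMeasurable_const).const_mul g⁻¹).mul hf.1
  · refine eventually_mem_nhdsWithin.mono fun g (hg : 0 < g) => ae_of_all _ fun x => ?_
    rw [norm_mul, norm_mul, norm_mul, Real.norm_of_nonneg (hV x),
      Real.norm_of_nonneg (inv_nonneg.2 hg.le)]
    gcongr
    rw [inv_mul_le_iff₀ hg, neg_mul]
    exact norm_exp_neg_sub_one_le (mul_nonneg hg.le (hV x))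
  · refine ae_of_all _ fun x => ?_
    have hd : HasDerivAt (fun g : ℝ => Real.exp (-g * V x)) (-V x) 0 := by
      simpa using ((hasDerivAt_id (0 : ℝ)).neg.mul_const (V x)).exp
    have := (hasDerivWithinAt_iff_tendsto_slope' Set.self_notMem_Ioi).1 hd.hasDerivWithinAt
    simpa [slope_def_field, div_eq_inv_mul] using this.mul_const (f x)

lemma hasDerivWithinAt_integral_tilted_neg_mul [IsProbabilityMeasure μ] (hV : ∀ x, 0 ≤ V x)
    (hV2 : MemLp V 2 μ) (hf : MemLp f 2 μ) :
    HasDerivWithinAt (fun g : ℝ => ∫ x, f x ∂(μ.tilted fun x => -g * V x)) (-cov[f, V; μ])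
      (Set.Ici 0) 0 := by
  have hVm : AEMeasurable V μ := hV2.aestronglyMeasurable.aemeasurable
  have hnum := hasDerivWithinAt_integral_exp_neg_mul_mul hV hVm (hf.integrable one_le_two)
    (hV2.integrable_mul hf)
  have hden := hasDerivWithinAt_integral_exp_neg_mul_mul hV hVm (integrable_const (1 : ℝ))
    (by simpa using hV2.integrable one_le_two)
  have hquot (g : ℝ) : ∫ x, f x ∂(μ.tilted fun x => -g * V x)
      = (∫ x, Real.exp (-g * V x) * f x ∂μ) / ∫ x, Real.exp (-g * V x) * 1 ∂μ := by
    simp_rw [integral_tilted, smul_eq_mul, div_mul_eq_mul_div, integral_div, mul_one]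
  simp_rw [hquot]
  convert! hnum.fun_div hden (by simp) using 1
  simp only [covariance_eq_sub hf hV2, Pi.mul_apply, neg_zero, zero_mul, Real.exp_zero, one_mul,
    mul_one, integral_const, probReal_univ, smul_eq_mul, mul_comm (f _)]
  ring

end LinearResponse

section Parity

lemma integral_eq_zero_of_comp_involutive_eq_neg {α F : Type*} [MeasurableSpace α] {μ : Measure α}
    [NormedAddCommGroup F] [NormedSpace ℝ F] {T : α → α} (hT : MeasurePreserving T μ μ)
    (hinv : Function.Involutive T) {f : α → F} (hf : ∀ x, f (T x) = -f x) : ∫ x, f x ∂μ = 0 := by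
  have hcomp : ∫ x, f (T x) ∂μ = ∫ x, f x ∂μ :=
    hT.integral_comp (MeasurableEquiv.ofInvolutive T hinv hT.measurable).measurableEmbedding f
  simp_rw [hf, integral_neg] at hcomp
  have := IsAddTorsionFree.of_isTorsionFree ℝ F
  exact self_eq_neg.1 hcomp.symm

lemma measurePreserving_pi_units_smul {α E : Type*} [Fintype α] [AddCommGroup E]
    [MeasurableSpace E] {μ : α → Measure E} [∀ s, SigmaFinite (μ s)]
    (hμ : ∀ s, MeasurePreserving (fun x => -x) (μ s) (μ s)) (ε : α → ℤˣ) :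
    MeasurePreserving (fun (Φ : α → E) s => ε s • Φ s) (Measure.pi μ) (Measure.pi μ) := by
  refine measurePreserving_pi (f := fun s x => ε s • x) μ μ fun s => ?_
  obtain h | h := Int.units_eq_one_or (ε s)
  · simp only [h, one_smul]
    exact MeasurePreserving.id (μ s)
  · simpa only [h, Units.neg_smul, one_smul] using hμ s

lemma involutive_units_smul {α E : Type*} [AddCommGroup E] (ε : α → ℤˣ) :
    Function.Involutive fun (Φ : α → E) s => ε s • Φ s := fun Φ => by
  simp [smul_smul]

end Parity

section TiltedMeasures

variable {α : Type*} [MeasurableSpace α] {μ : Measure α}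

lemma integral_exp_smul_eq_smul_integral_tilted {F : Type*} [NeZero μ] [NormedAddCommGroup F]
    [NormedSpace ℝ F] {f : α → ℝ} (hf : Integrable (fun x => Real.exp (f x)) μ) (g : α → F) :
    ∫ x, Real.exp (f x) • g x ∂μ = (∫ x, Real.exp (f x) ∂μ) • ∫ x, g x ∂(μ.tilted f) := by
  simp_rw [integral_tilted, div_eq_inv_mul, mul_smul, integral_smul,
    smul_inv_smul₀ (integral_exp_pos hf).ne']

lemma measurePreserving_tilted {T : α → α}
    (hT : MeasurePreserving T μ μ) {f : α → ℝ} (hf : Measurable f) (hfT : ∀ x, f (T x) = f x) :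
    MeasurePreserving T (μ.tilted f) (μ.tilted f) := by
  refine ⟨hT.measurable, Measure.ext fun s hs => ?_⟩
  rw [Measure.map_apply hT.measurable hs, tilted_apply' _ _ hs,
    tilted_apply' _ _ (hT.measurable hs), ← hT.setLIntegral_comp_preimage hs (by fun_prop)]
  simp_rw [hfT]

end TiltedMeasures

section ProductMeasures

variable {ι : Type*} [Fintype ι]

lemma pi_tilted {E : ι → Type*} [∀ i, MeasurableSpace (E i)] (μ : ∀ i, Measure (E i))
    [∀ i, SigmaFinite (μ i)] (f : ∀ i, E i → ℝ) :
    Measure.pi (fun i => (μ i).tilted (f i))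
      = (Measure.pi μ).tilted fun x => ∑ i, f i (x i) := by
  refine Measure.pi_eq fun s hs => ?_
  have hdens (x : ∀ i, E i) :
      Real.exp (∑ i, f i (x i)) / ∫ y, Real.exp (∑ i, f i (y i)) ∂Measure.pi μ
        = ∏ i, Real.exp (f i (x i)) / ∫ y, Real.exp (f i y) ∂μ i := by
    simp_rw [Real.exp_sum, integral_fintype_prod_eq_prod (fun i y => Real.exp (f i y)),
      Finset.prod_div_distrib]
  simp_rw [tilted_apply_eq_ofReal_integral' _ (MeasurableSet.univ_pi hs), hdens,
    Measure.restrict_pi_pi, tilted_apply_eq_ofReal_integral' _ (hs _)]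
  rw [integral_fintype_prod_eq_prod
      (fun i y => Real.exp (f i y) / ∫ y, Real.exp (f i y) ∂μ i),
    ENNReal.ofReal_prod_of_nonneg fun i _ => integral_nonneg fun y => by positivity]

lemma hasExpMoments_pi {E : ι → Type*} [∀ i, NormedAddCommGroup (E i)]
    [∀ i, SecondCountableTopology (E i)] [∀ i, MeasurableSpace (E i)]
    [∀ i, OpensMeasurableSpace (E i)] {μ : ∀ i, Measure (E i)} [∀ i, SigmaFinite (μ i)]
    (hμ : ∀ i, HasExpMoments (μ i)) : HasExpMoments (Measure.pi μ) := by
  intro d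
  refine (Integrable.fintype_prod_dep fun i => hμ i |d|).mono' ?_ (ae_of_all _ fun x => ?_)
  · exact (by fun_prop : Continuous fun x : ∀ i, E i => Real.exp (d * ‖x‖)).aestronglyMeasurable
  · rw [Real.norm_of_nonneg (Real.exp_pos _).le, ← Real.exp_sum, ← Finset.mul_sum]
    gcongr
    · exact le_abs_self d
    · refine (pi_norm_le_iff_of_nonneg (by positivity)).2 fun i => ?_
      exact Finset.single_le_sum (f := fun i => ‖x i‖) (fun j _ => norm_nonneg (x j))
        (Finset.mem_univ i)

lemma measurePreserving_curry {ι κ X : Type*} [Fintype ι] [Fintype κ] [MeasureSpace X]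
    [SigmaFinite (volume : Measure X)] :
    MeasurePreserving (MeasurableEquiv.curry ι κ X) := by
  refine MeasurePreserving.symm (MeasurableEquiv.curry ι κ X).symm
    ⟨MeasurableEquiv.measurable _, ?_⟩
  refine (Measure.pi_eq fun s _ => ?_).symm
  have hbox : (MeasurableEquiv.curry ι κ X).symm ⁻¹' Set.univ.pi s
      = Set.univ.pi fun i => Set.univ.pi fun k => s (i, k) := by
    ext Φ
    simp [Prod.forall, MeasurableEquiv.curry]
  rw [MeasurableEquiv.map_apply, hbox, Fintype.prod_prod_type]
  simp only [volume_pi, Measure.pi_pi]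

end ProductMeasures

section ComplexGaussian

variable {c : ℝ}

/-- The centred complex Gaussian measure with density proportional to `exp (-c |z|²)`, so that
`|z|²` has mean `1 / c`. It is the zero measure when `c ≤ 0`. -/
noncomputable def complexGaussian (c : ℝ) : Measure ℂ :=
  volume.tilted fun z => -c * ‖z‖ ^ 2

lemma integrable_exp_neg_mul_sq_norm (hc : 0 < c) :
    Integrable fun z : ℂ => Real.exp (-c * ‖z‖ ^ 2) := by
  refine (GaussianFourier.integrable_cexp_neg_mul_sq_norm_add (b := (c : ℂ)) (by simpa using hc)
    0 (0 : ℂ)).norm.congr (ae_of_all _ fun z => ?_)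
  simp [Complex.norm_exp, ← Complex.ofReal_pow]

lemma isProbabilityMeasure_complexGaussian (hc : 0 < c) :
    IsProbabilityMeasure (complexGaussian c) :=
  isProbabilityMeasure_tilted (integrable_exp_neg_mul_sq_norm hc)

lemma measurePreserving_neg_complexGaussian :
    MeasurePreserving (fun z => -z) (complexGaussian c) (complexGaussian c) :=
  measurePreserving_tilted (Measure.measurePreserving_neg volume) (by fun_prop) (by simp)

lemma hasExpMoments_complexGaussian (hc : 0 < c) : HasExpMoments (complexGaussian c) := by
  intro d
  rw [complexGaussian, integrable_tilted_iff (integrable_exp_neg_mul_sq_norm hc)]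
  refine ((integrable_exp_neg_mul_sq_norm (half_pos hc)).const_mul
    (Real.exp (d ^ 2 / (2 * c)))).mono' (by fun_prop) (ae_of_all _ fun z => ?_)
  rw [smul_eq_mul, ← Real.exp_add, ← Real.exp_add, Real.norm_of_nonneg (Real.exp_pos _).le]
  refine Real.exp_le_exp.2 ?_
  -- completing the square in `c / 2 * ‖z‖ ^ 2 - d * ‖z‖`
  have hsq : d ^ 2 / (2 * c) + -(c / 2) * ‖z‖ ^ 2 - (-c * ‖z‖ ^ 2 + d * ‖z‖)
      = (c * ‖z‖ - d) ^ 2 / (2 * c) := by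
    field_simp
    ring
  have : 0 ≤ (c * ‖z‖ - d) ^ 2 / (2 * c) := by positivity
  linarith

lemma integral_sq_norm_pow_complexGaussian (hc : 0 < c) (k : ℕ) :
    ∫ z, (‖z‖ ^ 2) ^ k ∂complexGaussian c = k.factorial / c ^ k := by
  have hmom (k : ℕ) : ∫ z : ℂ, (‖z‖ ^ 2) ^ k * Real.exp (-c * ‖z‖ ^ 2)
      = Real.pi * k.factorial / c ^ (k + 1) := by
    have hexp : ((2 * k : ℕ) + 2 : ℝ) / 2 = k + 1 := by push_cast; ring
    have h := Complex.integral_rpow_mul_exp_neg_mul_rpow one_le_two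
      (q := (2 * k : ℕ)) (by linarith [(2 * k : ℕ).cast_nonneg (α := ℝ)]) hc
    simp only [neg_div, hexp, Real.Gamma_nat_eq_factorial, Real.rpow_natCast, Real.rpow_two,
      pow_mul, Real.rpow_neg hc.le] at h
    rw [h]
    norm_cast
    field_simp
  have h0 := hmom 0
  simp only [pow_zero, one_mul] at h0
  simp_rw [complexGaussian, integral_tilted, smul_eq_mul, div_mul_eq_mul_div, integral_div,
    mul_comm (Real.exp _), hmom, h0]
  field_simp [Real.pi_ne_zero]
  simp [pow_succ']

end ComplexGaussian

section GaussianField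

open ProbabilityTheory

variable {α : Type*} [Fintype α] {c : α → ℝ}

/-- The Gaussian field of independent complex Gaussian variables `Φ s` with `E |Φ s|² = 1 / c s`. -/
noncomputable def gaussianField (c : α → ℝ) : Measure (α → ℂ) :=
  Measure.pi fun s => complexGaussian (c s)

lemma isProbabilityMeasure_gaussianField (hc : ∀ s, 0 < c s) :
    IsProbabilityMeasure (gaussianField c) := by
  have := fun s => isProbabilityMeasure_complexGaussian (hc s)
  exact Measure.pi.instIsProbabilityMeasure _

lemma hasExpMoments_gaussianField (hc : ∀ s, 0 < c s) : HasExpMoments (gaussianField c) := by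
  have := fun s => isProbabilityMeasure_complexGaussian (hc s)
  exact hasExpMoments_pi fun s => hasExpMoments_complexGaussian (hc s)

lemma measurePreserving_units_smul_gaussianField (hc : ∀ s, 0 < c s) (ε : α → ℤˣ) :
    MeasurePreserving (fun (Φ : α → ℂ) s => ε s • Φ s) (gaussianField c) (gaussianField c) := by
  have := fun s => isProbabilityMeasure_complexGaussian (hc s)
  exact measurePreserving_pi_units_smul (fun s => measurePreserving_neg_complexGaussian) ε

lemma gaussianField_eq_tilted :
    gaussianField c = volume.tilted fun Φ : α → ℂ => ∑ s, -c s * ‖Φ s‖ ^ 2 :=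
  pi_tilted (fun _ => volume) fun s z => -c s * ‖z‖ ^ 2

lemma integrable_exp_sum_neg_mul_sq_norm (hc : ∀ s, 0 < c s) :
    Integrable fun Φ : α → ℂ => Real.exp (∑ s, -c s * ‖Φ s‖ ^ 2) := by
  simp_rw [Real.exp_sum]
  exact .fintype_prod_dep fun s => integrable_exp_neg_mul_sq_norm (hc s)

/-- The monomial `∏ s, (|Φ s|²) ^ k s` in the site intensities `|Φ s|²`. -/
noncomputable def intensityMonomial (k : α → ℕ) (Φ : α → ℂ) : ℝ :=
  ∏ s, (‖Φ s‖ ^ 2) ^ k s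

lemma intensityMonomial_add (k l : α → ℕ) (Φ : α → ℂ) :
    intensityMonomial (k + l) Φ = intensityMonomial k Φ * intensityMonomial l Φ := by
  simp only [intensityMonomial, Pi.add_apply, pow_add, Finset.prod_mul_distrib]

lemma integral_intensityMonomial (hc : ∀ s, 0 < c s) (k : α → ℕ) :
    ∫ Φ, intensityMonomial k Φ ∂gaussianField c = ∏ s, (k s).factorial / c s ^ k s := by
  have := fun s => isProbabilityMeasure_complexGaussian (hc s)
  simp_rw [intensityMonomial, gaussianField,
    integral_fintype_prod_eq_prod (fun s z => (‖z‖ ^ 2) ^ k s)]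
  exact Finset.prod_congr rfl fun s _ => integral_sq_norm_pow_complexGaussian (hc s) (k s)

lemma integrable_intensityMonomial (hc : ∀ s, 0 < c s) (k : α → ℕ) :
    Integrable (intensityMonomial k) (gaussianField c) := by
  refine Integrable.of_integral_ne_zero ?_
  rw [integral_intensityMonomial hc]
  exact Finset.prod_ne_zero_iff.2 fun s _ =>
    div_ne_zero (by positivity) (pow_ne_zero _ (hc s).ne')

lemma memLp_two_intensityMonomial (hc : ∀ s, 0 < c s) (k : α → ℕ) :
    MemLp (intensityMonomial k) 2 (gaussianField c) := by
  rw [memLp_two_iff_integrable_sq (integrable_intensityMonomial hc k).aestronglyMeasurable]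
  simpa only [sq, ← intensityMonomial_add] using integrable_intensityMonomial hc (k + k)

lemma intensityMonomial_single [DecidableEq α] (s : α) (Φ : α → ℂ) :
    intensityMonomial (Pi.single s 1) Φ = ‖Φ s‖ ^ 2 := by
  simp [intensityMonomial, Pi.single_apply, pow_ite, Finset.prod_ite_eq']

lemma integral_intensityMonomial_add_single [DecidableEq α] (hc : ∀ s, 0 < c s) (k : α → ℕ)
    (s : α) :
    ∫ Φ, intensityMonomial (k + Pi.single s 1) Φ ∂gaussianField c
      = (k s + 1) / c s * ∫ Φ, intensityMonomial k Φ ∂gaussianField c := by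
  have hfactor : ∀ t,
      ((k + Pi.single s 1 : α → ℕ) t).factorial / c t ^ (k + Pi.single s 1 : α → ℕ) t
      = (if t = s then (k s + 1) / c s else 1) * ((k t).factorial / c t ^ k t) := by
    intro t
    obtain rfl | hts := eq_or_ne t s
    · simp only [Pi.add_apply, Pi.single_eq_same, Nat.factorial_succ, pow_succ', if_true]
      push_cast
      exact mul_div_mul_comm _ _ _ _
    · simp [hts]
  simp_rw [integral_intensityMonomial hc, hfactor, Finset.prod_mul_distrib]
  simp

lemma integral_sq_norm_gaussianField (hc : ∀ s, 0 < c s) (s : α) :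
    ∫ Φ : α → ℂ, ‖Φ s‖ ^ 2 ∂gaussianField c = 1 / c s := by
  classical
  simpa [intensityMonomial_single, integral_intensityMonomial hc] using
    integral_intensityMonomial_add_single hc 0 s

lemma integral_sq_norm_mul_sq_norm_gaussianField [DecidableEq α] (hc : ∀ s, 0 < c s) (s t : α) :
    ∫ Φ : α → ℂ, ‖Φ s‖ ^ 2 * ‖Φ t‖ ^ 2 ∂gaussianField c
      = (if s = t then 2 else 1) / (c s * c t) := by
  have h := integral_intensityMonomial_add_single hc (Pi.single s 1) t
  simp only [intensityMonomial_add, intensityMonomial_single,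
    integral_sq_norm_gaussianField hc, Pi.single_apply] at h
  rw [h, div_mul_div_comm, mul_one, mul_comm (c t)]
  simp only [eq_comm (a := t)]
  split_ifs <;> norm_num

lemma memLp_two_sq_norm (hc : ∀ s, 0 < c s) (s : α) :
    MemLp (fun Φ : α → ℂ => ‖Φ s‖ ^ 2) 2 (gaussianField c) := by
  classical
  simpa only [← intensityMonomial_single] using memLp_two_intensityMonomial hc (Pi.single s 1)

lemma cov_sq_norm_intensityMonomial (hc : ∀ s, 0 < c s) (p : α) (k : α → ℕ) :
    cov[fun Φ => ‖Φ p‖ ^ 2, intensityMonomial k; gaussianField c]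
      = k p / c p * ∫ Φ, intensityMonomial k Φ ∂gaussianField c := by
  classical
  have := isProbabilityMeasure_gaussianField hc
  have hp : (fun Φ : α → ℂ => ‖Φ p‖ ^ 2) = intensityMonomial (Pi.single p 1) :=
    funext fun Φ => (intensityMonomial_single p Φ).symm
  have hmul : (intensityMonomial (Pi.single p 1) * intensityMonomial k : (α → ℂ) → ℝ)
      = intensityMonomial (k + Pi.single p 1) :=
    funext fun Φ => by rw [intensityMonomial_add, Pi.mul_apply, mul_comm]
  rw [hp, covariance_eq_sub (memLp_two_intensityMonomial hc _) (memLp_two_intensityMonomial hc k),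
    hmul, integral_intensityMonomial_add_single hc, ← hp, integral_sq_norm_gaussianField hc]
  ring

end GaussianField

section Vertices

variable {ι κ : Type*}

/-- The contribution to `Tr ((Φ*Φ)²)` whose two conjugated factors are the entries `s` and `t`
of `Φ`. -/
noncomputable def vertex (s t : ι × κ) (Φ : ι × κ → ℂ) : ℝ :=
  (star (Φ s) * Φ (s.1, t.2) * (star (Φ t) * Φ (t.1, s.2))).re

lemma continuous_vertex (s t : ι × κ) : Continuous (vertex s t) := by
  unfold vertex
  fun_prop

lemma vertex_comm (s t : ι × κ) : vertex s t = vertex t s :=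
  funext fun _ => congrArg Complex.re (mul_comm _ _)

lemma vertex_of_fst_eq_or_snd_eq {s t : ι × κ} (h : s.1 = t.1 ∨ s.2 = t.2) (Φ : ι × κ → ℂ) :
    vertex s t Φ = ‖Φ s‖ ^ 2 * ‖Φ t‖ ^ 2 := by
  obtain ⟨i, j⟩ := s
  obtain ⟨i', j'⟩ := t
  have hsplit : star (Φ (i, j)) * Φ (i, j') * (star (Φ (i', j')) * Φ (i', j))
      = ((‖Φ (i, j)‖ ^ 2 * ‖Φ (i', j')‖ ^ 2 : ℝ) : ℂ) := by
    push_cast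
    simp only [← Complex.conj_mul', starRingEnd_apply]
    obtain rfl | rfl := h
    all_goals ring
  rw [vertex, hsplit, Complex.ofReal_re]

lemma vertex_sign_flip [DecidableEq ι] [DecidableEq κ] {s t : ι × κ} (h₁ : s.1 ≠ t.1)
    (h₂ : s.2 ≠ t.2) (Φ : ι × κ → ℂ) :
    vertex s t (fun u => Function.update (1 : ι × κ → ℤˣ) s (-1) u • Φ u) = -vertex s t Φ := by
  have hst : t ≠ s := fun h => h₁ (congrArg Prod.fst h).symm
  have hrow : (s.1, t.2) ≠ s := fun h => h₂ (congrArg Prod.snd h).symm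
  have hcol : (t.1, s.2) ≠ s := fun h => h₁ (congrArg Prod.fst h).symm
  simp [vertex, Function.update_of_ne hst, Function.update_of_ne hrow, Function.update_of_ne hcol]

variable [Fintype ι] [Fintype κ]

lemma hasExpGrowth_vertex (s t : ι × κ) : HasExpGrowth (vertex s t) := by
  have hstar (u : ι × κ) : HasExpGrowth fun Φ : ι × κ → ℂ => star (Φ u) :=
    (hasExpGrowth_apply u).of_norm_le fun Φ => (norm_star _).le
  exact (((hstar s).mul (hasExpGrowth_apply _)).mul
    ((hstar t).mul (hasExpGrowth_apply _))).of_norm_le fun Φ => Complex.abs_re_le_norm _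

end Vertices

section QuarticInteraction

variable {ι κ : Type*} [Fintype ι] [Fintype κ]

open scoped ComplexOrder in
lemma trace_conjTranspose_mul_self_sq_nonneg (A : Matrix ι κ ℂ) :
    0 ≤ (Aᴴ * A * (Aᴴ * A)).trace := by
  have hA : (Aᴴ * A)ᴴ = Aᴴ * A := isHermitian_conjTranspose_mul_self A
  simpa only [hA] using (posSemidef_conjTranspose_mul_self (Aᴴ * A)).trace_nonneg

/-- The quartic interaction `Tr ((Φ*Φ)²)`, which is real, for a rectangular matrix `Φ` whose
entries are indexed by pairs. -/
noncomputable def quartic (Φ : ι × κ → ℂ) : ℝ :=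
  ((of (Function.curry Φ))ᴴ * of (Function.curry Φ) *
    ((of (Function.curry Φ))ᴴ * of (Function.curry Φ))).trace.re

lemma quartic_nonneg (Φ : ι × κ → ℂ) : 0 ≤ quartic Φ :=
  (Complex.nonneg_iff.1 (trace_conjTranspose_mul_self_sq_nonneg _)).1

lemma ofReal_quartic (Φ : ι × κ → ℂ) :
    (quartic Φ : ℂ) = ((of (Function.curry Φ))ᴴ * of (Function.curry Φ) *
      ((of (Function.curry Φ))ᴴ * of (Function.curry Φ))).trace :=
  Complex.ext rfl (Complex.nonneg_iff.1 (trace_conjTranspose_mul_self_sq_nonneg _)).2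

lemma quartic_eq_sum_vertex (Φ : ι × κ → ℂ) : quartic Φ = ∑ s, ∑ t, vertex s t Φ := by
  simp only [quartic, vertex, trace, diag_apply, mul_apply, conjTranspose_apply, of_apply,
    Function.curry_apply, Finset.sum_mul_sum, Complex.re_sum, Fintype.sum_prod_type_right]
  exact Finset.sum_congr rfl fun j _ => Finset.sum_comm

lemma quartic_neg (Φ : ι × κ → ℂ) : quartic (fun s => -Φ s) = quartic Φ := by
  simp [quartic_eq_sum_vertex, vertex]

lemma continuous_quartic : Continuous (quartic : (ι × κ → ℂ) → ℝ) := by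
  simp_rw [funext quartic_eq_sum_vertex]
  exact continuous_finsetSum _ fun s _ =>
    continuous_finsetSum _ fun t _ => continuous_vertex s t

end QuarticInteraction

section FirstOrder

open ProbabilityTheory

variable {ι κ : Type*} [Fintype ι] [Fintype κ] {c : ι × κ → ℝ}

lemma memLp_two_vertex (hc : ∀ s, 0 < c s) (s t : ι × κ) :
    MemLp (vertex s t) 2 (gaussianField c) :=
  (hasExpMoments_gaussianField hc).memLp_two (continuous_vertex s t).aestronglyMeasurable
    (hasExpGrowth_vertex s t)

lemma memLp_two_quartic (hc : ∀ s, 0 < c s) : MemLp quartic 2 (gaussianField c) := by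
  simp_rw [funext quartic_eq_sum_vertex]
  exact memLp_finsetSum _ fun s _ => memLp_finsetSum _ fun t _ => memLp_two_vertex hc s t

lemma integral_mul_vertex_eq_zero (hc : ∀ s, 0 < c s) {s t : ι × κ} (h₁ : s.1 ≠ t.1)
    (h₂ : s.2 ≠ t.2) (g : (ι × κ → ℂ) → ℝ)
    (hg : ∀ (ε : ι × κ → ℤˣ) Φ, g (fun u => ε u • Φ u) = g Φ) :
    ∫ Φ, g Φ * vertex s t Φ ∂gaussianField c = 0 := by
  classical
  exact integral_eq_zero_of_comp_involutive_eq_neg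
    (measurePreserving_units_smul_gaussianField hc (Function.update 1 s (-1)))
    (involutive_units_smul _) fun Φ => by rw [hg, vertex_sign_flip h₁ h₂, mul_neg]

lemma integral_vertex [DecidableEq ι] [DecidableEq κ] (hc : ∀ s, 0 < c s) (s t : ι × κ) :
    ∫ Φ, vertex s t Φ ∂gaussianField c
      = ((if s.1 = t.1 then 1 else 0) + if s.2 = t.2 then 1 else 0) / (c s * c t) := by
  by_cases h : s.1 = t.1 ∨ s.2 = t.2
  · simp_rw [vertex_of_fst_eq_or_snd_eq h, integral_sq_norm_mul_sq_norm_gaussianField hc,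
      Prod.ext_iff]
    congr 1
    by_cases h₁ : s.1 = t.1 <;> by_cases h₂ : s.2 = t.2 <;> simp_all [one_add_one_eq_two]
  · obtain ⟨h₁, h₂⟩ := not_or.1 h
    simpa [h₁, h₂] using integral_mul_vertex_eq_zero hc h₁ h₂ (fun _ => 1) (by simp)

lemma cov_sq_norm_vertex [DecidableEq ι] [DecidableEq κ] (hc : ∀ s, 0 < c s) (p s t : ι × κ) :
    cov[fun Φ => ‖Φ p‖ ^ 2, vertex s t; gaussianField c]
      = ((if s = p then 1 else 0) + if t = p then 1 else 0) / c p
        * ∫ Φ, vertex s t Φ ∂gaussianField c := by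
  by_cases h : s.1 = t.1 ∨ s.2 = t.2
  · have hv : vertex s t = intensityMonomial (Pi.single s 1 + Pi.single t 1) := funext fun Φ => by
      rw [vertex_of_fst_eq_or_snd_eq h, intensityMonomial_add, intensityMonomial_single,
        intensityMonomial_single]
    rw [hv, cov_sq_norm_intensityMonomial hc]
    simp [Pi.single_apply, eq_comm]
  · obtain ⟨h₁, h₂⟩ := not_or.1 h
    have := isProbabilityMeasure_gaussianField hc
    have hzero : ∫ Φ, vertex s t Φ ∂gaussianField c = 0 := by simp [integral_vertex hc, h₁, h₂]
    rw [covariance_eq_sub (memLp_two_sq_norm hc p) (memLp_two_vertex hc s t), hzero]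
    simpa using integral_mul_vertex_eq_zero hc h₁ h₂ (fun Φ => ‖Φ p‖ ^ 2) fun ε Φ => by
      obtain h | h := Int.units_eq_one_or (ε p) <;> simp [h]

lemma sum_integral_vertex (hc : ∀ s, 0 < c s) (p : ι × κ) :
    ∑ t, ∫ Φ, vertex p t Φ ∂gaussianField c
      = 1 / c p * (∑ l, 1 / c (p.1, l) + ∑ k, 1 / c (k, p.2)) := by
  classical
  simp_rw [integral_vertex hc, add_div, Finset.sum_add_distrib, mul_add, Finset.mul_sum]
  congr 1
  · simp [Fintype.sum_prod_type_right, ite_div, mul_comm]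
  · simp [Fintype.sum_prod_type, ite_div, mul_comm]

theorem cov_sq_norm_quartic (hc : ∀ s, 0 < c s) (p : ι × κ) :
    cov[fun Φ => ‖Φ p‖ ^ 2, quartic; gaussianField c]
      = 2 / c p ^ 2 * (∑ l, 1 / c (p.1, l) + ∑ k, 1 / c (k, p.2)) := by
  classical
  have := isProbabilityMeasure_gaussianField hc
  have hp := memLp_two_sq_norm hc p
  calc cov[fun Φ => ‖Φ p‖ ^ 2, quartic; gaussianField c]
      = ∑ s, ∑ t, ((if s = p then 1 else 0) + if t = p then 1 else 0) / c p
          * ∫ Φ, vertex s t Φ ∂gaussianField c := by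
        simp_rw [funext quartic_eq_sum_vertex]
        rw [covariance_fun_sum_right
          (fun s => memLp_finsetSum _ fun t _ => memLp_two_vertex hc s t) hp]
        simp_rw [covariance_fun_sum_right (fun t => memLp_two_vertex hc _ t) hp,
          cov_sq_norm_vertex hc]
    _ = 1 / c p * ∑ t, ∫ Φ, vertex p t Φ ∂gaussianField c
          + 1 / c p * ∑ s, ∫ Φ, vertex s p Φ ∂gaussianField c := by
        simp_rw [add_div, add_mul, Finset.sum_add_distrib]
        congr 1
        · simp [ite_div, ite_mul, Finset.mul_sum]
        · rw [Finset.sum_comm]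
          simp [ite_div, ite_mul, Finset.mul_sum]
    _ = 2 / c p ^ 2 * (∑ l, 1 / c (p.1, l) + ∑ k, 1 / c (k, p.2)) := by
        simp_rw [vertex_comm _ p, sum_integral_vertex hc]
        ring

end FirstOrder

section Model

open ProbabilityTheory

variable {N : ℕ} {E Et : Fin N → ℝ} {lam : ℝ}

/-- The coefficient `N (E_n + Ẽ_m)` of `|Φ_{nm}|²` in `N S(Φ)`. -/
def lszCoeff (E Et : Fin N → ℝ) (s : Fin N × Fin N) : ℝ :=
  N * (E s.1 + Et s.2)

/-- The interacting LSZ probability measure `exp (-N S(Φ)) dΦ / Z(0,0)` on matrices with entries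
indexed by pairs, presented as a perturbation of its Gaussian part. -/
noncomputable def lszMeasure (E Et : Fin N → ℝ) (lam : ℝ) : Measure (Fin N × Fin N → ℂ) :=
  (gaussianField (lszCoeff E Et)).tilted fun Φ => -lam * (N / 2 * quartic Φ)

/-- The exponent `-N S(Φ)`, as a real number. -/
noncomputable def lszExponent (E Et : Fin N → ℝ) (lam : ℝ) (Φ : Fin N × Fin N → ℂ) : ℝ :=
  ∑ s, -lszCoeff E Et s * ‖Φ s‖ ^ 2 + -lam * (N / 2 * quartic Φ)

lemma ofReal_lszExponent (Φ : Fin N × Fin N → ℂ) :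
    (lszExponent E Et lam Φ : ℂ) = -(N : ℂ) * lszAction N E Et lam (Function.curry Φ) := by
  simp only [lszExponent, lszAction, lszCoeff, Fintype.sum_prod_type, Complex.normSq_eq_norm_sq,
    Function.curry_apply, mul_add (-(N : ℂ)), Finset.mul_sum]
  push_cast [ofReal_quartic]
  congr 1
  · exact Finset.sum_congr rfl fun _ _ => Finset.sum_congr rfl fun _ _ => by ring
  · ring

lemma lszCoeff_pos (h : ∀ n m, 0 < E n + Et m) (s : Fin N × Fin N) : 0 < lszCoeff E Et s :=
  mul_pos (Nat.cast_pos.2 s.1.pos) (h s.1 s.2)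

lemma neg_mul_quartic_nonpos (hlam : 0 ≤ lam) (Φ : Fin N × Fin N → ℂ) :
    -lam * (N / 2 * quartic Φ) ≤ 0 := by
  have := quartic_nonneg Φ
  rw [neg_mul]
  exact neg_nonpos.2 (by positivity)

lemma integrable_exp_lszExponent (h : ∀ n m, 0 < E n + Et m) (hlam : 0 ≤ lam) :
    Integrable fun Φ => Real.exp (lszExponent E Et lam Φ) := by
  refine (integrable_exp_sum_neg_mul_sq_norm (lszCoeff_pos h)).mono' ?_ (ae_of_all _ fun Φ => ?_)
  · have := continuous_quartic (ι := Fin N) (κ := Fin N)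
    exact (by unfold lszExponent; fun_prop :
      Continuous fun Φ => Real.exp (lszExponent E Et lam Φ)).aestronglyMeasurable
  · rw [Real.norm_of_nonneg (Real.exp_pos _).le, Real.exp_le_exp]
    exact add_le_of_nonpos_right (neg_mul_quartic_nonpos hlam Φ)

lemma lszMeasure_eq_tilted_volume (h : ∀ n m, 0 < E n + Et m) :
    lszMeasure E Et lam = volume.tilted (lszExponent E Et lam) := by
  rw [lszMeasure, gaussianField_eq_tilted,
    tilted_tilted (integrable_exp_sum_neg_mul_sq_norm (lszCoeff_pos h))]
  rfl

lemma isProbabilityMeasure_lszMeasure (h : ∀ n m, 0 < E n + Et m) (hlam : 0 ≤ lam) :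
    IsProbabilityMeasure (lszMeasure E Et lam) := by
  rw [lszMeasure_eq_tilted_volume h]
  exact isProbabilityMeasure_tilted (integrable_exp_lszExponent h hlam)

lemma hasExpMoments_lszMeasure (h : ∀ n m, 0 < E n + Et m) (hlam : 0 ≤ lam) :
    HasExpMoments (lszMeasure E Et lam) :=
  (hasExpMoments_gaussianField (lszCoeff_pos h)).tilted (neg_mul_quartic_nonpos hlam)

lemma integral_apply_lszMeasure (h : ∀ n m, 0 < E n + Et m) (s : Fin N × Fin N) :
    ∫ Φ, Φ s ∂lszMeasure E Et lam = 0 := by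
  have hneg := measurePreserving_units_smul_gaussianField (lszCoeff_pos h) (-1)
  refine integral_eq_zero_of_comp_involutive_eq_neg
    (measurePreserving_tilted hneg ?_ fun Φ => ?_) (involutive_units_smul (-1)) fun Φ => by simp
  · exact (continuous_quartic.measurable.const_mul _).const_mul _
  · simp [quartic_neg]

lemma lszZ_zero_add_smul_eMat (h : ∀ n m, 0 < E n + Et m) (hlam : 0 ≤ lam) (p q : Fin N) (t s : ℂ) :
    lszZ N E Et lam (0 + t • eMat N p q) (0 + s • eMat N q p)
      = (∫ Φ, Real.exp (lszExponent E Et lam Φ) : ℝ)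
        * ∫ Φ, Complex.exp (t * (N * star (Φ (p, q)))) * Complex.exp (s * (N * Φ (p, q)))
          ∂lszMeasure E Et lam := by
  have hJ (Φ : Fin N → Fin N → ℂ) :
      ∑ m, ∑ n, (0 + t • eMat N p q) n m * (starRingEnd ℂ) (Φ n m) = t * star (Φ p q) := by
    simp [eMat, ite_and]
  have hK (Φ : Fin N → Fin N → ℂ) :
      ∑ m, ∑ n, (0 + s • eMat N q p) m n * Φ n m = s * Φ p q := by
    simp [eMat, ite_and]
  rw [lszMeasure_eq_tilted_volume h, ← Complex.real_smul,
    ← integral_exp_smul_eq_smul_integral_tilted (integrable_exp_lszExponent h hlam), lszZ,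
    ← measurePreserving_curry.integral_comp (MeasurableEquiv.measurableEmbedding _)]
  congr 1 with Φ
  rw [lszIntegrand, hJ, hK, Complex.real_smul, Complex.ofReal_exp, ofReal_lszExponent,
    ← Complex.exp_add, ← Complex.exp_add]
  congr 1
  simp only [MeasurableEquiv.curry, MeasurableEquiv.coe_mk, Equiv.curry_apply, Function.curry]
  ring

lemma lszG2_eq_integral_sq_norm (h : ∀ n m, 0 < E n + Et m) (hlam : 0 ≤ lam) (p q : Fin N) :
    lszG2 N E Et p q lam = (N * ∫ Φ, ‖Φ (p, q)‖ ^ 2 ∂lszMeasure E Et lam : ℝ) := by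
  have := isProbabilityMeasure_lszMeasure h hlam
  have hN : (N : ℂ) ≠ 0 := Nat.cast_ne_zero.2 p.pos.ne'
  let proj : (Fin N × Fin N → ℂ) →L[ℝ] ℂ := ContinuousLinearMap.proj (p, q)
  let l : (Fin N × Fin N → ℂ) →L[ℝ] ℂ := (N : ℝ) • (Complex.conjCLE : ℂ →L[ℝ] ℂ).comp proj
  let l' : (Fin N × Fin N → ℂ) →L[ℝ] ℂ := (N : ℝ) • proj
  have hl (Φ : Fin N × Fin N → ℂ) : l Φ = N * star (Φ (p, q)) := by simp [l, proj]
  have hl' (Φ : Fin N × Fin N → ℂ) : l' Φ = N * Φ (p, q) := by simp [l', proj]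
  have hmean : ∫ Φ : Fin N × Fin N → ℂ, N * Φ (p, q) ∂lszMeasure E Et lam = 0 := by
    rw [integral_const_mul, integral_apply_lszMeasure h, mul_zero]
  have hsecond (Φ : Fin N × Fin N → ℂ) :
      N * star (Φ (p, q)) * (N * Φ (p, q)) = (N ^ 2 * ‖Φ (p, q)‖ ^ 2 : ℝ) := by
    push_cast
    rw [← Complex.conj_mul', starRingEnd_apply]
    ring
  have hcum := (hasExpMoments_lszMeasure h hlam).deriv_deriv_log_integral_cexp l l'
    (integral_exp_pos (integrable_exp_lszExponent h hlam))
  simp_rw [hl, hl', hmean, mul_zero, sub_zero, hsecond, integral_complex_ofReal,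
    integral_const_mul] at hcum
  simp only [lszG2, dJ, dK, lszZ_zero_add_smul_eMat h hlam, hcum]
  push_cast
  field_simp

lemma integral_sq_norm_lszMeasure_zero (h : ∀ n m, 0 < E n + Et m) (p q : Fin N) :
    N * ∫ Φ, ‖Φ (p, q)‖ ^ 2 ∂lszMeasure E Et 0 = 1 / (E p + Et q) := by
  have := isProbabilityMeasure_gaussianField (lszCoeff_pos h)
  have hN : (N : ℝ) ≠ 0 := Nat.cast_ne_zero.2 p.pos.ne'
  have hfree : lszMeasure E Et 0 = gaussianField (lszCoeff E Et) := by
    simp [lszMeasure]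
  rw [hfree, integral_sq_norm_gaussianField (lszCoeff_pos h), lszCoeff, mul_one_div,
    div_mul_cancel_left₀ hN, one_div]

lemma hasDerivWithinAt_integral_sq_norm_lszMeasure (h : ∀ n m, 0 < E n + Et m) (p q : Fin N) :
    HasDerivWithinAt (fun lam => N * ∫ Φ, ‖Φ (p, q)‖ ^ 2 ∂lszMeasure E Et lam)
      (-(1 / (E p + Et q) ^ 2) * (1 / N) * (∑ l, 1 / (E p + Et l) + ∑ k, 1 / (E k + Et q)))
      (Set.Ici 0) 0 := by
  have := isProbabilityMeasure_gaussianField (lszCoeff_pos h)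
  have hN : (N : ℝ) ≠ 0 := Nat.cast_ne_zero.2 p.pos.ne'
  have hpq := (h p q).ne'
  have hderiv := hasDerivWithinAt_integral_tilted_neg_mul
    (fun Φ => mul_nonneg (by positivity) (quartic_nonneg Φ))
    ((memLp_two_quartic (lszCoeff_pos h)).const_mul (N / 2 : ℝ))
    (memLp_two_sq_norm (lszCoeff_pos h) (p, q))
  convert! hderiv.const_mul (N : ℝ) using 1
  rw [covariance_const_mul_right, cov_sq_norm_quartic (lszCoeff_pos h)]
  simp only [lszCoeff, one_div, mul_inv, ← Finset.mul_sum]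
  field_simp

end Model

theorem lsz_two_point_perturbative_general {N : ℕ} {E Et : Fin N → ℝ}
    (h : ∀ n m, 0 < E n + Et m) (p q : Fin N) :
    (lszG2 N E Et p q 0 = 1 / (((E p + Et q : ℝ)) : ℂ)) ∧
    Filter.Tendsto
      (fun lam : ℝ => (lszG2 N E Et p q lam - 1 / (((E p + Et q : ℝ)) : ℂ)) / (lam : ℂ))
      (nhdsWithin 0 (Set.Ioi 0))
      (nhds (-(1 / (((E p + Et q : ℝ)) : ℂ) ^ 2) * ((1 : ℂ) / (N : ℂ)) *
        ((∑ l, 1 / (((E p + Et l : ℝ)) : ℂ)) + ∑ k, 1 / (((E k + Et q : ℝ)) : ℂ)))) := by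
  have hzero := integral_sq_norm_lszMeasure_zero h p q
  refine ⟨by rw [lszG2_eq_integral_sq_norm h le_rfl, hzero]; push_cast; rfl, ?_⟩
  have hslope := (hasDerivWithinAt_iff_tendsto_slope' Set.self_notMem_Ioi).1
    (hasDerivWithinAt_integral_sq_norm_lszMeasure h p q).Ioi_of_Ici
  have hlim := (Complex.continuous_ofReal.tendsto _).comp hslope
  push_cast at hlim ⊢
  refine hlim.congr' (eventually_mem_nhdsWithin.mono fun lam (hlam : 0 < lam) => ?_)
  simp only [Function.comp_apply, slope_def_field, hzero, sub_zero,
    lszG2_eq_integral_sq_norm h hlam.le]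
  push_cast
  rfl

/-- First-order perturbative expansion of the LSZ 2-point function:
`G_{|pq|}(0) = 1/(E_p+Ẽ_q)` and
`lim_{λ→0⁺} (G_{|pq|}(λ) − 1/(E_p+Ẽ_q))/λ
  = −(1/(E_p+Ẽ_q)²)·(1/N)·(Σ_l 1/(E_p+Ẽ_l) + Σ_k 1/(E_k+Ẽ_q))`. -/
theorem lsz_two_point_perturbative
    (N : ℕ) (hN : 1 ≤ N) (E Et : Fin N → ℝ)
    (hE : ∀ n, 0 < E n) (hEt : ∀ n, 0 < Et n) (p q : Fin N) :
    (lszG2 N E Et p q 0 = 1 / (((E p + Et q : ℝ)) : ℂ)) ∧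
    Filter.Tendsto
      (fun lam : ℝ => (lszG2 N E Et p q lam - 1 / (((E p + Et q : ℝ)) : ℂ)) / (lam : ℂ))
      (nhdsWithin 0 (Set.Ioi 0))
      (nhds (-(1 / (((E p + Et q : ℝ)) : ℂ) ^ 2) * ((1 : ℂ) / (N : ℂ)) *
        ((∑ l, 1 / (((E p + Et l : ℝ)) : ℂ)) + ∑ k, 1 / (((E k + Et q : ℝ)) : ℂ)))) :=
  lsz_two_point_perturbative_general (fun n m => add_pos (hE n) (hEt m)) p q
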